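/- arXiv:1909.11473 — 3 statements merged into one kernel-verified Lean document; each statement's English description precedes it below -/
import Mathlib

section
/- Let g : ℝ⁷ → ℝ⁷ be a bijective linear map such that φ₀(g v₁, g v₂, g v₃) = φ₀(v₁, v₂, v₃) for all v₁, v₂, v₃ ∈ ℝ⁷. Then g preserves the standard Euclidean inner product, i.e. ⟪g v, g w⟫ = ⟪v, w⟫ for all v, w ∈ ℝ⁷, and g preserves orientation, i.e. det g = 1. -/
/-- The alternating 3-form `dx^{ijk}` on `ℝ⁷` (with indices `0`-based), given by
`(v₁,v₂,v₃) ↦ det` of the `3×3` matrix whose `a`-th row is `((vₐ)ᵢ, (vₐ)ⱼ, (vₐ)ₖ)`. -/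
noncomputable def dx (i j k : Fin 7) : AlternatingMap ℝ (Fin 7 → ℝ) ℝ (Fin 3) :=
  (Matrix.detRowAlternating : AlternatingMap ℝ (Fin 3 → ℝ) ℝ (Fin 3)).compLinearMap
    (LinearMap.funLeft ℝ ℝ ![i, j, k])

/-- The standard `G₂` 3-form
`φ₀ = dx^{123} + dx^{145} + dx^{167} + dx^{246} − dx^{257} − dx^{347} − dx^{356}` on `ℝ⁷`
(written with `0`-based indices). -/
noncomputable def phi0 : AlternatingMap ℝ (Fin 7 → ℝ) ℝ (Fin 3) :=
  dx 0 1 2 + dx 0 3 4 + dx 0 5 6 + dx 1 3 5 - dx 1 4 6 - dx 2 3 6 - dx 2 4 5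

/-- The matrix of the cross product `x ↦ u × x` attached to `phi0`. -/
def crossMat (u : Fin 7 → ℝ) : Matrix (Fin 7) (Fin 7) ℝ :=
  !![0, -u 2, u 1, -u 4, u 3, -u 6, u 5;
    u 2, 0, -u 0, -u 5, u 6, u 3, -u 4;
    -u 1, u 0, 0, u 6, u 5, -u 4, -u 3;
    u 4, u 5, -u 6, 0, -u 0, -u 1, u 2;
    -u 3, -u 6, -u 5, u 0, 0, u 2, u 1;
    u 6, -u 3, u 4, u 1, -u 2, 0, -u 0;
    -u 5, u 4, u 3, -u 2, -u 1, u 0, 0]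

open Matrix

lemma dx_eq (i j k : Fin 7) (u v w : Fin 7 → ℝ) : dx i j k ![u, v, w] =
    u i * v j * w k - u i * v k * w j - u j * v i * w k + u j * v k * w i
      + u k * v i * w j - u k * v j * w i := by
  change Matrix.det (Matrix.of fun a => LinearMap.funLeft ℝ ℝ ![i, j, k] (![u, v, w] a)) = _
  rw [Matrix.det_fin_three]
  simp [LinearMap.funLeft]

lemma phi0_eq (u v w : Fin 7 → ℝ) : phi0 ![u, v, w] = (crossMat u *ᵥ v) ⬝ᵥ w := by
  simp only [phi0, AlternatingMap.add_apply, AlternatingMap.sub_apply, dx_eq]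
  simp [crossMat, dotProduct, mulVec, Fin.sum_univ_seven]
  ring

lemma crossMat_transpose (u : Fin 7 → ℝ) : (crossMat u)ᵀ = -crossMat u := by
  ext i j
  fin_cases i <;> fin_cases j <;> simp [crossMat]

lemma crossMat_self (u : Fin 7 → ℝ) : crossMat u *ᵥ u = 0 := by
  ext i
  fin_cases i <;> simp [crossMat, mulVec, dotProduct, Fin.sum_univ_seven] <;> ring

lemma crossMat_sq (u : Fin 7 → ℝ) :
    crossMat u * crossMat u = vecMulVec u u - (u ⬝ᵥ u) • 1 := by
  ext i j
  fin_cases i <;> fin_cases j <;>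
    simp [crossMat, Matrix.mul_apply, dotProduct, Fin.sum_univ_seven, vecMulVec_apply] <;> ring

lemma crossMat_dot_left (u v : Fin 7 → ℝ) : (crossMat u *ᵥ v) ⬝ᵥ u = 0 := by
  rw [dotProduct_comm, dotProduct_mulVec, ← mulVec_transpose, crossMat_transpose, neg_mulVec,
    crossMat_self]
  simp

lemma crossMat_dot_right (u v : Fin 7 → ℝ) : (crossMat u *ᵥ v) ⬝ᵥ v = 0 := by
  have h : (crossMat u *ᵥ v) ⬝ᵥ v = -((crossMat u *ᵥ v) ⬝ᵥ v) := by
    conv_lhs => rw [dotProduct_comm, dotProduct_mulVec, ← mulVec_transpose, crossMat_transpose,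
      neg_mulVec, neg_dotProduct]
  linarith

lemma det_aux (v η : Fin 7 → ℝ) (hs : v ⬝ᵥ v ≠ 0) :
    (crossMat v + vecMulVec η η).det * (-crossMat v + vecMulVec v v).det
      = (v ⬝ᵥ v) ^ 6 * (η ⬝ᵥ v) ^ 2 := by
  set s := v ⬝ᵥ v with hsdef
  set r := η ⬝ᵥ v with hr
  set p : Fin 7 → ℝ := r • v + crossMat v *ᵥ η with hp
  have hpv : p ⬝ᵥ v = r * s := by
    rw [hp, add_dotProduct, crossMat_dot_left, smul_dotProduct]; simp [hsdef]
  have hpη : p ⬝ᵥ η = r * r := by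
    rw [hp, add_dotProduct, crossMat_dot_right, smul_dotProduct, dotProduct_comm v η]; simp [hr]
  let U : Matrix (Fin 7) (Fin 2) ℝ := of fun i => ![v i, η i]
  let V : Matrix (Fin 2) (Fin 7) ℝ := of ![-v, p]
  have hUV : U * V = -vecMulVec v v + vecMulVec η p := by
    ext i j
    simp [U, V, Matrix.mul_apply, Fin.sum_univ_two, vecMulVec_apply]
  have hVU : V * U = !![-s, -r; r * s, r * r] := by
    ext i j
    fin_cases i <;> fin_cases j
    · simp [U, V, Matrix.mul_apply, hsdef, dotProduct]
    · simp [U, V, Matrix.mul_apply, hr, dotProduct, mul_comm]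
    · simpa [U, V, Matrix.mul_apply, dotProduct] using hpv
    · simpa [U, V, Matrix.mul_apply, dotProduct] using hpη
  have hprod : (crossMat v + vecMulVec η η) * (-crossMat v + vecMulVec v v)
      = s • (1 + (s⁻¹ • U) * V) := by
    have h1 : vecMulVec η η * crossMat v = -vecMulVec η (crossMat v *ᵥ η) := by
      rw [vecMulVec_mul, ← mulVec_transpose, crossMat_transpose, neg_mulVec, vecMulVec_neg]
    have h2 : crossMat v * vecMulVec v v = 0 := by
      rw [mul_vecMulVec, crossMat_self]; simp
    have h3 : vecMulVec η η * vecMulVec v v = r • vecMulVec η v := by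
      rw [vecMulVec_mul_vecMulVec, hr]
      ext i j
      simp [vecMulVec_apply]; ring
    have h4 : vecMulVec η p = r • vecMulVec η v + vecMulVec η (crossMat v *ᵥ η) := by
      rw [hp, vecMulVec_add, vecMulVec_smul]
    rw [smul_add, smul_mul, smul_smul, mul_inv_cancel₀ hs, one_smul, hUV, h4, add_mul, mul_add,
      mul_add, mul_neg, mul_neg, h1, h2, h3, crossMat_sq]
    abel
  rw [← det_mul, hprod, det_smul, det_one_add_mul_comm, Matrix.mul_smul, hVU, det_fin_two]
  simp
  field_simp
  ring

lemma det_sq (v η : Fin 7 → ℝ) (hs : v ⬝ᵥ v ≠ 0) :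
    (crossMat v + vecMulVec η η).det ^ 2 = (v ⬝ᵥ v) ^ 4 * (η ⬝ᵥ v) ^ 4 := by
  have h1 := det_aux v η hs
  have h2 := det_aux v v hs
  have h3 : (crossMat v + vecMulVec v v).det = (-crossMat v + vecMulVec v v).det := by
    rw [← det_transpose, transpose_add, crossMat_transpose, transpose_vecMulVec]
  rw [h3] at h2
  have h8 : (v ⬝ᵥ v) ^ 8 ≠ 0 := pow_ne_zero _ hs
  apply mul_right_cancel₀ h8
  calc _ = (crossMat v + vecMulVec η η).det ^ 2 * ((v ⬝ᵥ v) ^ 6 * (v ⬝ᵥ v) ^ 2) := by ring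
    _ = ((crossMat v + vecMulVec η η).det * (-crossMat v + vecMulVec v v).det) ^ 2 := by
      rw [← h2]; ring
    _ = _ := by rw [h1]; ring

lemma conj_eq (G : Matrix (Fin 7) (Fin 7) ℝ)
    (hpres : ∀ u v w : Fin 7 → ℝ, (crossMat (G *ᵥ u) *ᵥ (G *ᵥ v)) ⬝ᵥ (G *ᵥ w)
      = (crossMat u *ᵥ v) ⬝ᵥ w) (u : Fin 7 → ℝ) : Gᵀ * crossMat (G *ᵥ u) * G = crossMat u := by
  apply ext_of_mulVec_single
  intro i
  apply dotProduct_eq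
  intro w
  rw [← hpres, ← mulVec_mulVec, ← mulVec_mulVec]
  rw [dotProduct_comm, dotProduct_mulVec, vecMul_transpose, dotProduct_comm]

lemma norm_rel (G : Matrix (Fin 7) (Fin 7) ℝ) (hG : IsUnit G.det)
    (hpres : ∀ u v w : Fin 7 → ℝ, (crossMat (G *ᵥ u) *ᵥ (G *ᵥ v)) ⬝ᵥ (G *ᵥ w)
      = (crossMat u *ᵥ v) ⬝ᵥ w) (u : Fin 7 → ℝ) :
    G.det ^ 2 * ((G *ᵥ u) ⬝ᵥ (G *ᵥ u)) ^ 2 = (u ⬝ᵥ u) ^ 2 := by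
  by_cases hu : u = 0
  · simp [hu]
  have hGu : G *ᵥ u ≠ 0 := by
    intro h
    apply hu
    exact (mulVec_injective_iff_isUnit.2 ((isUnit_iff_isUnit_det G).2 hG)) (by simpa using h)
  have hs : u ⬝ᵥ u ≠ 0 := by simpa [dotProduct_self_eq_zero] using hu
  have hs' : (G *ᵥ u) ⬝ᵥ (G *ᵥ u) ≠ 0 := by simpa [dotProduct_self_eq_zero] using hGu
  set η := Gᵀ⁻¹ *ᵥ u with hη
  have h1 : Gᵀ *ᵥ η = u := by
    rw [hη, mulVec_mulVec, mul_nonsing_inv _ (by rwa [det_transpose]), one_mulVec]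
  have h2 : η ⬝ᵥ (G *ᵥ u) = u ⬝ᵥ u := by
    rw [dotProduct_mulVec, ← mulVec_transpose, h1]
  have h3 : Gᵀ * (crossMat (G *ᵥ u) + vecMulVec η η) * G = crossMat u + vecMulVec u u := by
    rw [mul_add, add_mul, conj_eq G hpres, mul_vecMulVec, vecMulVec_mul, ← mulVec_transpose, h1]
  have h4 := congrArg det h3
  rw [det_mul, det_mul, det_transpose] at h4
  have h5 := det_sq u u hs
  have h6 := det_sq (G *ᵥ u) η hs'
  rw [h2] at h6
  rw [← h4] at h5
  have h7 : G.det ^ 4 * (((G *ᵥ u) ⬝ᵥ (G *ᵥ u)) ^ 4 * (u ⬝ᵥ u) ^ 4)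
      = (u ⬝ᵥ u) ^ 4 * (u ⬝ᵥ u) ^ 4 := by
    rw [← h6, ← h5]; ring
  have h8 : (G.det ^ 2 * ((G *ᵥ u) ⬝ᵥ (G *ᵥ u)) ^ 2) ^ 2 = ((u ⬝ᵥ u) ^ 2) ^ 2 := by
    apply mul_right_cancel₀ (pow_ne_zero 4 hs)
    linarith
  exact (pow_left_inj₀ (by positivity) (by positivity) two_ne_zero).1 h8

lemma norm_rel' (G : Matrix (Fin 7) (Fin 7) ℝ) (hG : IsUnit G.det)
    (hpres : ∀ u v w : Fin 7 → ℝ, (crossMat (G *ᵥ u) *ᵥ (G *ᵥ v)) ⬝ᵥ (G *ᵥ w)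
      = (crossMat u *ᵥ v) ⬝ᵥ w) (u : Fin 7 → ℝ) :
    |G.det| * ((G *ᵥ u) ⬝ᵥ (G *ᵥ u)) = u ⬝ᵥ u := by
  have h := norm_rel G hG hpres u
  have p1 : 0 ≤ (G *ᵥ u) ⬝ᵥ (G *ᵥ u) := Finset.sum_nonneg fun i _ => mul_self_nonneg _
  have p2 : 0 ≤ u ⬝ᵥ u := Finset.sum_nonneg fun i _ => mul_self_nonneg _
  apply (pow_left_inj₀ (by positivity) p2 two_ne_zero).1
  rw [mul_pow, sq_abs, h]

lemma inner_rel (G : Matrix (Fin 7) (Fin 7) ℝ) (hG : IsUnit G.det)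
    (hpres : ∀ u v w : Fin 7 → ℝ, (crossMat (G *ᵥ u) *ᵥ (G *ᵥ v)) ⬝ᵥ (G *ᵥ w)
      = (crossMat u *ᵥ v) ⬝ᵥ w) (u v : Fin 7 → ℝ) :
    |G.det| * ((G *ᵥ u) ⬝ᵥ (G *ᵥ v)) = u ⬝ᵥ v := by
  have h1 := norm_rel' G hG hpres (u + v)
  have h2 := norm_rel' G hG hpres u
  have h3 := norm_rel' G hG hpres v
  simp only [mulVec_add, add_dotProduct, dotProduct_add] at h1
  rw [dotProduct_comm (G *ᵥ v) (G *ᵥ u), dotProduct_comm v u] at h1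
  linarith

lemma mat_rel (G : Matrix (Fin 7) (Fin 7) ℝ) (hG : IsUnit G.det)
    (hpres : ∀ u v w : Fin 7 → ℝ, (crossMat (G *ᵥ u) *ᵥ (G *ᵥ v)) ⬝ᵥ (G *ᵥ w)
      = (crossMat u *ᵥ v) ⬝ᵥ w) : |G.det| • (Gᵀ * G) = 1 := by
  apply ext_of_mulVec_single
  intro i
  apply dotProduct_eq
  intro w
  rw [one_mulVec, ← inner_rel G hG hpres (Pi.single i 1) w, smul_mulVec, ← mulVec_mulVec, smul_dotProduct,
    dotProduct_comm, dotProduct_mulVec, vecMul_transpose, dotProduct_comm, smul_eq_mul]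

lemma abs_det (G : Matrix (Fin 7) (Fin 7) ℝ) (hG : IsUnit G.det)
    (hpres : ∀ u v w : Fin 7 → ℝ, (crossMat (G *ᵥ u) *ᵥ (G *ᵥ v)) ⬝ᵥ (G *ᵥ w)
      = (crossMat u *ᵥ v) ⬝ᵥ w) : |G.det| = 1 := by
  have h := congrArg det (mat_rel G hG hpres)
  rw [det_smul, det_mul, det_transpose, det_one, ← abs_mul_abs_self G.det] at h
  have h9 : |G.det| ^ 9 = 1 := by
    rw [← h, Fintype.card_fin]; ring
  exact (pow_eq_one_iff_of_nonneg (abs_nonneg _) (by norm_num)).1 h9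

lemma inner_pres (G : Matrix (Fin 7) (Fin 7) ℝ) (hG : IsUnit G.det)
    (hpres : ∀ u v w : Fin 7 → ℝ, (crossMat (G *ᵥ u) *ᵥ (G *ᵥ v)) ⬝ᵥ (G *ᵥ w)
      = (crossMat u *ᵥ v) ⬝ᵥ w) (u v : Fin 7 → ℝ) : (G *ᵥ u) ⬝ᵥ (G *ᵥ v) = u ⬝ᵥ v := by
  have h := inner_rel G hG hpres u v
  rwa [abs_det G hG hpres, one_mul] at h

lemma cross_pres (G : Matrix (Fin 7) (Fin 7) ℝ) (hG : IsUnit G.det)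
    (hpres : ∀ u v w : Fin 7 → ℝ, (crossMat (G *ᵥ u) *ᵥ (G *ᵥ v)) ⬝ᵥ (G *ᵥ w)
      = (crossMat u *ᵥ v) ⬝ᵥ w) (u v : Fin 7 → ℝ) :
    crossMat (G *ᵥ u) *ᵥ (G *ᵥ v) = G *ᵥ (crossMat u *ᵥ v) := by
  apply dotProduct_eq
  intro w
  have h1 : G * G⁻¹ = 1 := mul_nonsing_inv _ hG
  have hw : w = G *ᵥ (G⁻¹ *ᵥ w) := by rw [mulVec_mulVec, h1, one_mulVec]
  rw [hw, hpres, inner_pres G hG hpres]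

/-- Left multiplication by the imaginary octonion `u`, on `ℝ × ℝ⁷`. -/
noncomputable def octL (u : Fin 7 → ℝ) : Module.End ℝ (ℝ × (Fin 7 → ℝ)) where
  toFun q := (-(u ⬝ᵥ q.2), q.1 • u + crossMat u *ᵥ q.2)
  map_add' p q := by
    ext1
    · simp [dotProduct_add]; ring
    · simp [mulVec_add, add_smul]; abel
  map_smul' c q := by
    ext1
    · simp
    · simp [mulVec_smul, mul_smul]

lemma crossMat_add (u v : Fin 7 → ℝ) : crossMat (u + v) = crossMat u + crossMat v := by
  ext i j
  fin_cases i <;> fin_cases j <;> simp [crossMat] <;> ring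

lemma crossMat_smul (c : ℝ) (v : Fin 7 → ℝ) : crossMat (c • v) = c • crossMat v := by
  ext i j
  fin_cases i <;> fin_cases j <;> simp [crossMat]

lemma octL_add (u v : Fin 7 → ℝ) : octL (u + v) = octL u + octL v := by
  apply LinearMap.ext
  intro q
  ext1
  · simp [octL, add_dotProduct]; ring
  · simp [octL, crossMat_add, add_mulVec]; abel

lemma octL_smul (c : ℝ) (v : Fin 7 → ℝ) : octL (c • v) = c • octL v := by
  apply LinearMap.ext
  intro q
  ext1
  · simp [octL]
  · simp [octL, crossMat_smul, smul_mulVec, smul_comm c]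

lemma octL_sq (u : Fin 7 → ℝ) : octL u * octL u = -(u ⬝ᵥ u) • 1 := by
  apply LinearMap.ext
  intro q
  ext1
  · simp [octL, dotProduct_add, dotProduct_comm u (crossMat u *ᵥ q.2), crossMat_dot_left, mul_comm]
  · simp [octL, mulVec_add, mulVec_smul, crossMat_self, mulVec_mulVec, crossMat_sq, sub_mulVec,
      smul_mulVec, vecMulVec_mulVec]
    abel

lemma octL_anti (u v : Fin 7 → ℝ) :
    octL u * octL v + octL v * octL u = -(2 * (u ⬝ᵥ v)) • 1 := by
  have h := octL_sq (u + v)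
  rw [octL_add, add_mul, mul_add, mul_add, octL_sq, octL_sq] at h
  simp only [add_dotProduct, dotProduct_add, dotProduct_comm v u] at h
  have : octL u * octL v + octL v * octL u =
    (-(u ⬝ᵥ u) • 1 + octL u * octL v + (octL v * octL u + -(v ⬝ᵥ v) • 1))
      - (-(u ⬝ᵥ u) • 1 + -(v ⬝ᵥ v) • 1) := by abel
  rw [this, h]
  module

lemma octL_refl (u v : Fin 7 → ℝ) (hu : u ⬝ᵥ u = 1) :
    octL (v - (2 * (u ⬝ᵥ v)) • u) = octL u * octL v * octL u := by
  have h1 : octL u * octL v = -(2 * (u ⬝ᵥ v)) • 1 - octL v * octL u := by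
    rw [← octL_anti]; abel
  rw [h1, sub_mul, mul_assoc, octL_sq, hu, sub_eq_add_neg, ← neg_smul, octL_add, octL_smul]
  rw [smul_mul_assoc, one_mul, mul_smul_comm, mul_one]
  module

/-- Product of the left multiplications along a 7-tuple. -/
noncomputable def octProd (f : Fin 7 → Fin 7 → ℝ) : Module.End ℝ (ℝ × (Fin 7 → ℝ)) :=
  octL (f 0) * octL (f 1) * octL (f 2) * octL (f 3) * octL (f 4) * octL (f 5) * octL (f 6)

lemma conj_prod_aux {R : Type*} [Ring R] (u a b c d e f k : R) (h : u * u = -1) :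
    (u * a * u) * (u * b * u) * (u * c * u) * (u * d * u) * (u * e * u) * (u * f * u)
      * (u * k * u) = u * (a * b * c * d * e * f * k) * u := by
  have hsq : ∀ X, u * (u * X) = -X := by
    intro X
    rw [← mul_assoc, h]; simp
  simp only [mul_assoc, hsq, _root_.mul_neg, _root_.neg_mul, neg_neg]

lemma octProd_refl (u : Fin 7 → ℝ) (hu : u ⬝ᵥ u = 1) (f : Fin 7 → Fin 7 → ℝ) :
    octProd (fun i => f i - (2 * (u ⬝ᵥ f i)) • u) = octL u * octProd f * octL u := by
  have hsq : octL u * octL u = -1 := by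
    rw [octL_sq, hu]; module
  simp only [octProd, octL_refl _ _ hu]
  exact conj_prod_aux _ _ _ _ _ _ _ _ hsq

lemma octL_e0 (a x0 x1 x2 x3 x4 x5 x6 : ℝ) :
    octL (Pi.single 0 1) (a, ![x0, x1, x2, x3, x4, x5, x6])
      = (-x0, ![a, -x2, x1, -x4, x3, -x6, x5]) := by
  ext1
  · simp [octL]
  · ext k
    fin_cases k <;> simp [octL, crossMat, vecHead, vecTail]

lemma octL_e1 (a x0 x1 x2 x3 x4 x5 x6 : ℝ) :
    octL (Pi.single 1 1) (a, ![x0, x1, x2, x3, x4, x5, x6])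
      = (-x1, ![x2, a, -x0, -x5, x6, x3, -x4]) := by
  ext1
  · simp [octL]
  · ext k
    fin_cases k <;> simp [octL, crossMat, vecHead, vecTail]

lemma octL_e2 (a x0 x1 x2 x3 x4 x5 x6 : ℝ) :
    octL (Pi.single 2 1) (a, ![x0, x1, x2, x3, x4, x5, x6])
      = (-x2, ![-x1, x0, a, x6, x5, -x4, -x3]) := by
  ext1
  · simp [octL]
  · ext k
    fin_cases k <;> simp [octL, crossMat, vecHead, vecTail]

lemma octL_e3 (a x0 x1 x2 x3 x4 x5 x6 : ℝ) :
    octL (Pi.single 3 1) (a, ![x0, x1, x2, x3, x4, x5, x6])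
      = (-x3, ![x4, x5, -x6, a, -x0, -x1, x2]) := by
  ext1
  · simp [octL]
  · ext k
    fin_cases k <;> simp [octL, crossMat, vecHead, vecTail]

lemma octL_e4 (a x0 x1 x2 x3 x4 x5 x6 : ℝ) :
    octL (Pi.single 4 1) (a, ![x0, x1, x2, x3, x4, x5, x6])
      = (-x4, ![-x3, -x6, -x5, x0, a, x2, x1]) := by
  ext1
  · simp [octL]
  · ext k
    fin_cases k <;> simp [octL, crossMat, vecHead, vecTail]

lemma octL_e5 (a x0 x1 x2 x3 x4 x5 x6 : ℝ) :
    octL (Pi.single 5 1) (a, ![x0, x1, x2, x3, x4, x5, x6])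
      = (-x5, ![x6, -x3, x4, x1, -x2, a, -x0]) := by
  ext1
  · simp [octL]
  · ext k
    fin_cases k <;> simp [octL, crossMat, vecHead, vecTail]

lemma octL_e6 (a x0 x1 x2 x3 x4 x5 x6 : ℝ) :
    octL (Pi.single 6 1) (a, ![x0, x1, x2, x3, x4, x5, x6])
      = (-x6, ![-x5, x4, x3, -x2, -x1, x0, a]) := by
  ext1
  · simp [octL]
  · ext k
    fin_cases k <;> simp [octL, crossMat, vecHead, vecTail]

lemma octProd_std : octProd (fun i => Pi.single i 1) = (1 : ℝ) • 1 := by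
  apply LinearMap.ext
  rintro ⟨a, x⟩
  have hx : x = ![x 0, x 1, x 2, x 3, x 4, x 5, x 6] := by
    ext k
    fin_cases k <;> rfl
  rw [hx]
  simp only [octProd, Module.End.mul_apply, octL_e0, octL_e1, octL_e2, octL_e3, octL_e4, octL_e5,
    octL_e6]
  simp

/-- The product of the left multiplications along the images of the standard frame under a
product of reflections is multiplied by the determinant. -/
lemma octProd_list (l : List (EuclideanSpace ℝ (Fin 7))) :
    octProd (fun i => ((l.map fun v => (ℝ ∙ v)ᗮ.reflection).prod
        (EuclideanSpace.single i 1)).ofLp)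
      = (LinearMap.det ((l.map fun v => (ℝ ∙ v)ᗮ.reflection).prod.toLinearEquiv :
          EuclideanSpace ℝ (Fin 7) →ₗ[ℝ] EuclideanSpace ℝ (Fin 7))) • (1 : ℝ) • 1 := by
  induction l with
  | nil =>
    rw [← octProd_std]
    have : LinearMap.det (((1 : EuclideanSpace ℝ (Fin 7) ≃ₗᵢ[ℝ] EuclideanSpace ℝ (Fin 7))).toLinearEquiv :
          EuclideanSpace ℝ (Fin 7) →ₗ[ℝ] EuclideanSpace ℝ (Fin 7)) = 1 := LinearMap.det_id
    simp only [List.map_nil, List.prod_nil, this, one_smul]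
    rfl
  | cons v l ih =>
    simp only [List.map_cons, List.prod_cons]
    set P := (l.map fun v => (ℝ ∙ v)ᗮ.reflection).prod with hP
    have hdet : LinearMap.det (((ℝ ∙ v)ᗮ.reflection * P).toLinearEquiv :
          EuclideanSpace ℝ (Fin 7) →ₗ[ℝ] EuclideanSpace ℝ (Fin 7)) =
        LinearMap.det ((ℝ ∙ v)ᗮ.reflection.toLinearEquiv :
          EuclideanSpace ℝ (Fin 7) →ₗ[ℝ] EuclideanSpace ℝ (Fin 7)) *
        LinearMap.det (P.toLinearEquiv :
          EuclideanSpace ℝ (Fin 7) →ₗ[ℝ] EuclideanSpace ℝ (Fin 7)) := by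
      rw [← LinearMap.det_comp]
      rfl
    have hd2 : LinearMap.det ((ℝ ∙ v)ᗮ.reflection.toLinearEquiv :
          EuclideanSpace ℝ (Fin 7) →ₗ[ℝ] EuclideanSpace ℝ (Fin 7))
          = (-1) ^ Module.finrank ℝ (ℝ ∙ v)ᗮᗮ := (ℝ ∙ v)ᗮ.det_reflection
    rw [Submodule.orthogonal_orthogonal] at hd2
    rw [hdet, hd2]
    by_cases hv : v = 0
    · have : ∀ x, ((ℝ ∙ v)ᗮ.reflection * P) x = P x := by
        intro x
        change (ℝ ∙ v)ᗮ.reflection (P x) = P x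
        rw [Submodule.reflection_orthogonal_apply, Submodule.reflection_singleton_apply]
        simp [hv]
      simp only [this]
      have h0 : Module.finrank ℝ (ℝ ∙ v) = 0 := by
        rw [hv, Submodule.span_zero_singleton, finrank_bot]
      rw [ih, h0, pow_zero, one_mul]
    · rw [finrank_span_singleton hv]
      have hn : ‖v‖ ≠ 0 := norm_ne_zero_iff.2 hv
      set u : Fin 7 → ℝ := ‖v‖⁻¹ • v.ofLp with hu
      have hvv : v.ofLp ⬝ᵥ v.ofLp = ‖v‖ ^ 2 := by
        rw [EuclideanSpace.real_norm_sq_eq]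
        simp [dotProduct, sq]
      have huu : u ⬝ᵥ u = 1 := by
        rw [hu, smul_dotProduct, dotProduct_smul, hvv]
        simp
        field_simp
      have : ∀ x, (((ℝ ∙ v)ᗮ.reflection * P) x).ofLp
          = (P x).ofLp - (2 * (u ⬝ᵥ (P x).ofLp)) • u := by
        intro x
        change ((ℝ ∙ v)ᗮ.reflection (P x)).ofLp = _
        have hin : inner ℝ v (P x) = v.ofLp ⬝ᵥ (P x).ofLp := by
          rw [EuclideanSpace.inner_eq_star_dotProduct, dotProduct_comm]
          simp
        rw [Submodule.reflection_orthogonal_apply, Submodule.reflection_singleton_apply, hin, hu,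
          smul_dotProduct]
        ext k
        simp
        field_simp
      simp only [this]
      rw [octProd_refl u huu, ih]
      simp only [smul_mul_assoc, mul_smul_comm, mul_one, octL_sq, huu]
      module

lemma octL_pres (G : Matrix (Fin 7) (Fin 7) ℝ)
    (h1 : ∀ u v, (G *ᵥ u) ⬝ᵥ (G *ᵥ v) = u ⬝ᵥ v)
    (h2 : ∀ u v, crossMat (G *ᵥ u) *ᵥ (G *ᵥ v) = G *ᵥ (crossMat u *ᵥ v))
    (u : Fin 7 → ℝ) (q : ℝ × (Fin 7 → ℝ)) :
    octL (G *ᵥ u) (q.1, G *ᵥ q.2) = ((octL u q).1, G *ᵥ (octL u q).2) := by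
  ext1
  · simp [octL, h1]
  · simp [octL, h2, mulVec_add, mulVec_smul]

theorem statement0 (g : (Fin 7 → ℝ) →ₗ[ℝ] (Fin 7 → ℝ)) (hg : Function.Bijective g)
    (hpres : ∀ v₁ v₂ v₃ : Fin 7 → ℝ, phi0 ![g v₁, g v₂, g v₃] = phi0 ![v₁, v₂, v₃]) :
    (∀ v w : Fin 7 → ℝ, ∑ i, g v i * g w i = ∑ i, v i * w i) ∧ LinearMap.det g = 1 := by
  set G := LinearMap.toMatrix' g with hGdef
  have hGv : ∀ v, G *ᵥ v = g v := fun v => LinearMap.toMatrix'_mulVec g v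
  have hG : IsUnit G.det := by
    rw [← isUnit_iff_isUnit_det, ← mulVec_injective_iff_isUnit]
    intro x y hxy
    exact hg.1 (by simpa [hGv] using hxy)
  have hp : ∀ u v w : Fin 7 → ℝ, (crossMat (G *ᵥ u) *ᵥ (G *ᵥ v)) ⬝ᵥ (G *ᵥ w)
      = (crossMat u *ᵥ v) ⬝ᵥ w := by
    intro u v w
    rw [← phi0_eq, ← phi0_eq, hGv, hGv, hGv, hpres]
  have hin := inner_pres G hG hp
  have hcr := cross_pres G hG hp
  have hip : ∀ v w : Fin 7 → ℝ, ∑ i, g v i * g w i = ∑ i, v i * w i := by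
    intro v w
    have := hin v w
    rwa [hGv, hGv] at this
  refine ⟨hip, ?_⟩
  let e : (Fin 7 → ℝ) ≃ₗ[ℝ] EuclideanSpace ℝ (Fin 7) := (WithLp.linearEquiv 2 ℝ (Fin 7 → ℝ)).symm
  let g' : EuclideanSpace ℝ (Fin 7) →ₗ[ℝ] EuclideanSpace ℝ (Fin 7) :=
    (e : (Fin 7 → ℝ) →ₗ[ℝ] EuclideanSpace ℝ (Fin 7)) ∘ₗ g ∘ₗ
      (e.symm : EuclideanSpace ℝ (Fin 7) →ₗ[ℝ] (Fin 7 → ℝ))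
  have hg'in : ∀ x y, inner ℝ (g' x) (g' y) = inner ℝ x y := by
    intro x y
    rw [EuclideanSpace.inner_eq_star_dotProduct, EuclideanSpace.inner_eq_star_dotProduct]
    exact hip y.ofLp x.ofLp
  let Φ : EuclideanSpace ℝ (Fin 7) ≃ₗᵢ[ℝ] EuclideanSpace ℝ (Fin 7) :=
    (g'.isometryOfInner hg'in).toLinearIsometryEquiv rfl
  have hΦ : ∀ x, (Φ x).ofLp = g x.ofLp := fun x => rfl
  have hΦdet : LinearMap.det (Φ.toLinearEquiv :
      EuclideanSpace ℝ (Fin 7) →ₗ[ℝ] EuclideanSpace ℝ (Fin 7)) = LinearMap.det g := by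
    rw [← LinearMap.det_conj g e]
    rfl
  obtain ⟨l, -, hl⟩ := Φ.reflections_generate_dim
  have key := octProd_list l
  rw [← hl, hΦdet] at key
  have hL := octL_pres G hin hcr
  have hfr : ∀ i : Fin 7, (Φ (EuclideanSpace.single i 1)).ofLp = G *ᵥ Pi.single i 1 := by
    intro i
    rw [hΦ, hGv]
    rfl
  simp only [hfr] at key
  have hconj : ∀ q : ℝ × (Fin 7 → ℝ), octProd (fun i => G *ᵥ Pi.single i 1) (q.1, G *ᵥ q.2)
      = ((octProd (fun i => Pi.single i 1) q).1,
          G *ᵥ (octProd (fun i => Pi.single i 1) q).2) := by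
    intro q
    simp only [octProd, Module.End.mul_apply, hL]
  have h1 := hconj (1, 0)
  rw [key, octProd_std] at h1
  have h2 := congrArg Prod.fst h1
  simpa using h2
end

section
/- The orbit of φ₀ under the action of GL(7,ℝ) by pullback, i.e. the set { (v₁,v₂,v₃) ↦ φ₀(g v₁, g v₂, g v₃) : g ∈ GL(7,ℝ) }, is an open subset of the (finite-dimensional) real vector space of alternating 3-forms on ℝ⁷, endowed with its canonical topology as a finite-dimensional normed space. -/
/-- The canonical topology on the finite-dimensional real vector space of alternating 3-forms
on `ℝ⁷`: the topology induced from pointwise convergence, which (by uniqueness of the Hausdorff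
vector space topology in finite dimensions) is the canonical topology of this finite-dimensional
normed space. -/
noncomputable instance : TopologicalSpace (AlternatingMap ℝ (Fin 7 → ℝ) ℝ (Fin 3)) :=
  TopologicalSpace.induced (fun φ => (⇑φ : (Fin 3 → Fin 7 → ℝ) → ℝ)) inferInstance

/-- Explicit solution of the linearised equation; row i is the image of the i-th basis vector. -/
noncomputable def solve (c : Fin 7 → Fin 7 → Fin 7 → ℝ) : Fin 7 → Fin 7 → ℝ :=
  ![![(1/3) * c 0 1 2 + (1/3) * c 0 3 4 + (1/3) * c 0 5 6 + (-1/6) * c 1 3 5 + (1/6) * c 1 4 6 + (1/6) * c 2 3 6 + (1/6) * c 2 4 5,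
      (1/2) * c 0 3 5 + (-1/2) * c 0 4 6 + (-1/2) * c 1 3 4 + (1/2) * c 1 5 6,
      (-1/2) * c 0 3 6 + (-1/2) * c 0 4 5 + (-1/2) * c 2 3 4 + (1/2) * c 2 5 6,
      (-1/2) * c 0 1 5 + (1/2) * c 0 2 6 + (-1/2) * c 1 2 3 + (1/2) * c 3 5 6,
      (1/2) * c 0 1 6 + (1/2) * c 0 2 5 + (-1/2) * c 1 2 4 + (1/2) * c 4 5 6,
      0,
      0],
    ![c 1 3 4,
      (1/3) * c 0 1 2 + (-1/6) * c 0 3 4 + (-1/6) * c 0 5 6 + (1/3) * c 1 3 5 + (-1/3) * c 1 4 6 + (1/6) * c 2 3 6 + (1/6) * c 2 4 5,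
      (-1/2) * c 1 3 6 + (-1/2) * c 1 4 5 + (-1/2) * c 2 3 5 + (-1/2) * c 2 4 6,
      (1/2) * c 0 1 4 + (1/2) * c 0 2 3 + (1/2) * c 1 2 6 + (-1/2) * c 3 4 6,
      0,
      0,
      0],
    ![c 2 3 4,
      c 2 3 5,
      (1/3) * c 0 1 2 + (-1/6) * c 0 3 4 + (-1/6) * c 0 5 6 + (-1/6) * c 1 3 5 + (1/6) * c 1 4 6 + (-1/3) * c 2 3 6 + (-1/3) * c 2 4 5,
      (-1/2) * c 0 1 3 + (1/2) * c 0 2 4 + (1/2) * c 1 2 5 + (-1/2) * c 3 4 5,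
      0,
      0,
      0],
    ![c 1 2 3,
      -c 0 2 3,
      c 0 1 3,
      (-1/6) * c 0 1 2 + (1/3) * c 0 3 4 + (-1/6) * c 0 5 6 + (1/3) * c 1 3 5 + (1/6) * c 1 4 6 + (-1/3) * c 2 3 6 + (1/6) * c 2 4 5,
      0,
      0,
      0],
    ![c 1 2 4,
      (-1/2) * c 0 1 3 + (-1/2) * c 0 2 4 + (1/2) * c 1 2 5 + (-1/2) * c 3 4 5,
      (1/2) * c 0 1 4 + (-1/2) * c 0 2 3 + (-1/2) * c 1 2 6 + (1/2) * c 3 4 6,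
      (-1/2) * c 1 3 6 + (1/2) * c 1 4 5 + (-1/2) * c 2 3 5 + (-1/2) * c 2 4 6,
      (-1/6) * c 0 1 2 + (1/3) * c 0 3 4 + (-1/6) * c 0 5 6 + (-1/6) * c 1 3 5 + (-1/3) * c 1 4 6 + (1/6) * c 2 3 6 + (-1/3) * c 2 4 5,
      0,
      0],
    ![(1/2) * c 0 1 3 + (-1/2) * c 0 2 4 + (1/2) * c 1 2 5 + (1/2) * c 3 4 5,
      (1/2) * c 0 1 6 + (-1/2) * c 0 2 5 + (-1/2) * c 1 2 4 + (1/2) * c 4 5 6,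
      (1/2) * c 0 1 5 + (1/2) * c 0 2 6 + (-1/2) * c 1 2 3 + (1/2) * c 3 5 6,
      (1/2) * c 0 3 6 + (-1/2) * c 0 4 5 + (1/2) * c 2 3 4 + (-1/2) * c 2 5 6,
      (1/2) * c 0 3 5 + (1/2) * c 0 4 6 + (1/2) * c 1 3 4 + (-1/2) * c 1 5 6,
      (-1/6) * c 0 1 2 + (-1/6) * c 0 3 4 + (1/3) * c 0 5 6 + (1/3) * c 1 3 5 + (1/6) * c 1 4 6 + (1/6) * c 2 3 6 + (-1/3) * c 2 4 5,
      0],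
    ![(-1/2) * c 0 1 4 + (-1/2) * c 0 2 3 + (1/2) * c 1 2 6 + (1/2) * c 3 4 6,
      (-1/2) * c 0 1 5 + (-1/2) * c 0 2 6 + (-1/2) * c 1 2 3 + (1/2) * c 3 5 6,
      (1/2) * c 0 1 6 + (-1/2) * c 0 2 5 + (1/2) * c 1 2 4 + (-1/2) * c 4 5 6,
      (-1/2) * c 0 3 5 + (-1/2) * c 0 4 6 + (1/2) * c 1 3 4 + (-1/2) * c 1 5 6,
      (1/2) * c 0 3 6 + (-1/2) * c 0 4 5 + (-1/2) * c 2 3 4 + (1/2) * c 2 5 6,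
      (1/2) * c 1 3 6 + (-1/2) * c 1 4 5 + (-1/2) * c 2 3 5 + (-1/2) * c 2 4 6,
      (-1/6) * c 0 1 2 + (-1/6) * c 0 3 4 + (1/3) * c 0 5 6 + (-1/6) * c 1 3 5 + (-1/3) * c 1 4 6 + (-1/3) * c 2 3 6 + (1/6) * c 2 4 5]]

/-- Evaluation formula for `phi0`. -/
theorem phi0_eval (v : Fin 3 → Fin 7 → ℝ) : phi0 v =
    (Matrix.of fun a b => v a (![0, 1, 2] b)).det + (Matrix.of fun a b => v a (![0, 3, 4] b)).det
    + (Matrix.of fun a b => v a (![0, 5, 6] b)).det + (Matrix.of fun a b => v a (![1, 3, 5] b)).det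
    - (Matrix.of fun a b => v a (![1, 4, 6] b)).det - (Matrix.of fun a b => v a (![2, 3, 6] b)).det
    - (Matrix.of fun a b => v a (![2, 4, 5] b)).det := rfl

/-- The standard basis vectors. -/
def stdE (i : Fin 7) : Fin 7 → ℝ := fun l => if l = i then 1 else 0

set_option maxHeartbeats 4000000 in
theorem solve_apply (c : Fin 7 → Fin 7 → Fin 7 → ℝ) (i j k : Fin 7) (hij : i < j) (hjk : j < k) :
    phi0 ![solve c i, stdE j, stdE k] + phi0 ![stdE i, solve c j, stdE k]
      + phi0 ![stdE i, stdE j, solve c k] = c i j k := by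
  simp only [phi0_eval, Matrix.det_fin_three, Matrix.of_apply]
  fin_cases i <;> fin_cases j <;> first | (exfalso; revert hij; decide) | skip
  all_goals fin_cases k <;> first | (exfalso; revert hjk; decide) | skip
  all_goals
    simp [stdE, solve]
    try ring

/-- Strictly increasing triples of indices. -/
abbrev Trip := {p : Fin 3 → Fin 7 // StrictMono p}

/-- `phi0` as a continuous multilinear map. -/
noncomputable def phiC : ContinuousMultilinearMap ℝ (fun _ : Fin 3 => Fin 7 → ℝ) ℝ :=
  { phi0.toMultilinearMap with
    cont := by
      change Continuous fun v => phi0 v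
      simp only [phi0_eval]
      fun_prop }

/-- The orbit map in coordinates; `g i` is the image of the `i`-th basis vector. -/
noncomputable def orbF (g : Fin 7 → Fin 7 → ℝ) : Trip → ℝ := fun p => phi0 (fun a => g (p.1 a))

/-- Reindexing. -/
noncomputable def reidx (p : Trip) : (Fin 7 → Fin 7 → ℝ) →L[ℝ] (Fin 3 → Fin 7 → ℝ) :=
  ContinuousLinearMap.pi fun a => ContinuousLinearMap.proj (p.1 a)

theorem orbF_deriv : HasStrictFDerivAt orbF
    (ContinuousLinearMap.pi fun p : Trip =>
      (phiC.linearDeriv (fun a => stdE (p.1 a))).comp (reidx p)) stdE := by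
  rw [hasStrictFDerivAt_pi]
  intro p
  exact HasStrictFDerivAt.comp (g := phiC) (f := reidx p) stdE
    (phiC.hasStrictFDerivAt (fun a => stdE (p.1 a))) (reidx p).hasStrictFDerivAt

theorem deriv_surj : (ContinuousLinearMap.pi fun p : Trip =>
      (phiC.linearDeriv (fun a => stdE (p.1 a))).comp (reidx p)).range = ⊤ := by
  rw [LinearMap.range_eq_top]
  intro c
  classical
  let c' : Fin 7 → Fin 7 → Fin 7 → ℝ := fun i j k =>
    if h : StrictMono ![i, j, k] then c ⟨_, h⟩ else 0
  obtain ⟨S, hS⟩ : ∃ S : Fin 7 → Fin 7 → ℝ, ∀ i j k : Fin 7, i < j → j < k →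
      phi0 ![S i, stdE j, stdE k] + phi0 ![stdE i, S j, stdE k]
        + phi0 ![stdE i, stdE j, S k] = c' i j k := ⟨solve c', solve_apply c'⟩
  refine ⟨S, ?_⟩
  funext p
  have hp : ![p.1 0, p.1 1, p.1 2] = p.1 := by
    funext a; fin_cases a <;> rfl
  have h := hS (p.1 0) (p.1 1) (p.1 2) (p.2 (by decide)) (p.2 (by decide))
  have hc : c' (p.1 0) (p.1 1) (p.1 2) = c p := by
    have h3 : StrictMono ![p.1 0, p.1 1, p.1 2] := by rw [hp]; exact p.2
    simp only [c', dif_pos h3]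
    congr 1
    exact Subtype.ext hp
  rw [← hc, ← h]
  change (phiC.linearDeriv (fun a => stdE (p.1 a))) (fun a => S (p.1 a)) = _
  rw [ContinuousMultilinearMap.linearDeriv_apply, Fin.sum_univ_three]
  change phi0 _ + phi0 _ + phi0 _ = _
  have e0 : Function.update (fun a => stdE (p.1 a)) 0 (S (p.1 0))
      = ![S (p.1 0), stdE (p.1 1), stdE (p.1 2)] := by
    funext a; fin_cases a <;> simp
  have e1 : Function.update (fun a => stdE (p.1 a)) 1 (S (p.1 1))
      = ![stdE (p.1 0), S (p.1 1), stdE (p.1 2)] := by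
    funext a; fin_cases a <;> simp
  have e2 : Function.update (fun a => stdE (p.1 a)) 2 (S (p.1 2))
      = ![stdE (p.1 0), stdE (p.1 1), S (p.1 2)] := by
    funext a; fin_cases a <;> simp
  rw [e0, e1, e2]

/-- Coordinates of a form. -/
noncomputable def coordR (ψ : AlternatingMap ℝ (Fin 7 → ℝ) ℝ (Fin 3)) : Trip → ℝ :=
  fun p => ψ (fun a => stdE (p.1 a))

theorem continuous_eval (v : Fin 3 → Fin 7 → ℝ) :
    Continuous fun ψ : AlternatingMap ℝ (Fin 7 → ℝ) ℝ (Fin 3) => ψ v :=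
  (continuous_apply v).comp continuous_induced_dom

theorem continuous_coordR : Continuous coordR :=
  continuous_pi fun _ => continuous_eval _

theorem stdE_eq (i : Fin 7) : stdE i = Pi.basisFun ℝ (Fin 7) i := by
  funext l
  simp [stdE, Pi.single_apply]

theorem coordR_inj {ψ χ : AlternatingMap ℝ (Fin 7 → ℝ) ℝ (Fin 3)} (h : coordR ψ = coordR χ) :
    ψ = χ := by
  refine Module.Basis.ext_alternating (Pi.basisFun ℝ (Fin 7)) ?_
  intro v hv
  simp only [← stdE_eq]
  have hs : StrictMono (v ∘ Tuple.sort v) :=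
    (Tuple.monotone_sort v).strictMono_of_injective (hv.comp (Tuple.sort v).injective)
  have h1 := congrFun h ⟨_, hs⟩
  change ψ ((fun a => stdE (v a)) ∘ Tuple.sort v) = χ ((fun a => stdE (v a)) ∘ Tuple.sort v) at h1
  rw [AlternatingMap.map_perm, AlternatingMap.map_perm] at h1
  rcases Int.units_eq_one_or (Equiv.Perm.sign (Tuple.sort v)) with h2 | h2
  · simpa [h2] using h1
  · simpa [h2] using h1

/-- The orbit. -/
def orb : Set (AlternatingMap ℝ (Fin 7 → ℝ) ℝ (Fin 3)) :=
  {ψ | ∃ g : (Fin 7 → ℝ) →ₗ[ℝ] (Fin 7 → ℝ), Function.Bijective g ∧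
        ∀ v₁ v₂ v₃ : Fin 7 → ℝ, ψ ![v₁, v₂, v₃] = phi0 ![g v₁, g v₂, g v₃]}

theorem vec_map (g : (Fin 7 → ℝ) →ₗ[ℝ] (Fin 7 → ℝ)) (v₁ v₂ v₃ : Fin 7 → ℝ) :
    (fun a => g ((![v₁, v₂, v₃] : Fin 3 → Fin 7 → ℝ) a)) = ![g v₁, g v₂, g v₃] := by
  funext a; fin_cases a <;> rfl

theorem orb_nhds : orb ∈ nhds phi0 := by
  have hmap := orbF_deriv.map_nhds_eq_of_surj deriv_surj
  have hdet : {g : Fin 7 → Fin 7 → ℝ | (Matrix.of g).det ≠ 0} ∈ nhds stdE := by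
    apply IsOpen.mem_nhds
    · apply isOpen_ne_fun _ continuous_const
      exact Continuous.matrix_det continuous_id
    · have : Matrix.of stdE = (1 : Matrix (Fin 7) (Fin 7) ℝ) := by
        ext i j; simp [stdE, Matrix.one_apply, eq_comm]
      simp [this]
  have h1 : orbF '' {g | (Matrix.of g).det ≠ 0} ∈ nhds (orbF stdE) := by
    rw [← hmap]; exact Filter.image_mem_map hdet
  have h2 := continuous_coordR.continuousAt (x := phi0) |>.preimage_mem_nhds
    (show orbF '' {g | (Matrix.of g).det ≠ 0} ∈ nhds (coordR phi0) from h1)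
  refine Filter.mem_of_superset h2 ?_
  rintro ψ ⟨g, hg, hgψ⟩
  let L : (Fin 7 → ℝ) →ₗ[ℝ] (Fin 7 → ℝ) := (Matrix.of g).transpose.mulVecLin
  have hL : ∀ i, L (stdE i) = g i := by
    intro i
    rw [stdE_eq]
    funext l
    simp [L]
  have hψ : ψ = phi0.compLinearMap L := by
    apply coordR_inj
    rw [← hgψ]
    funext p
    change phi0 _ = phi0 (fun a => L (stdE (p.1 a)))
    simp only [hL]
  refine ⟨L, ?_, ?_⟩
  · have hu : IsUnit (Matrix.of g).transpose := by
      rw [Matrix.isUnit_iff_isUnit_det, Matrix.det_transpose]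
      exact isUnit_iff_ne_zero.mpr hg
    exact ⟨Matrix.mulVec_injective_iff_isUnit.mpr hu, Matrix.mulVec_surjective_iff_isUnit.mpr hu⟩
  · intro v₁ v₂ v₃
    rw [hψ, ← vec_map]
    rfl

theorem orb_open : IsOpen orb := by
  rw [isOpen_iff_mem_nhds]
  rintro ψ ⟨g, hg, hψ⟩
  let e := LinearEquiv.ofBijective g hg
  let P : AlternatingMap ℝ (Fin 7 → ℝ) ℝ (Fin 3) → AlternatingMap ℝ (Fin 7 → ℝ) ℝ (Fin 3) :=
    fun χ => χ.compLinearMap (e.symm : (Fin 7 → ℝ) →ₗ[ℝ] (Fin 7 → ℝ))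
  have hP : Continuous P :=
    continuous_induced_rng.mpr (continuous_pi fun v => continuous_eval _)
  have heta : ∀ v : Fin 3 → Fin 7 → ℝ, v = ![v 0, v 1, v 2] := by
    intro v; funext a; fin_cases a <;> rfl
  have hge : ∀ x, g (e.symm x) = x := fun x => e.apply_symm_apply x
  have hPψ : P ψ = phi0 := by
    ext v
    change ψ (fun a => e.symm (v a)) = _
    rw [heta (fun a => e.symm (v a)), hψ]
    simp only [hge]
    rw [← heta v]
  have h := hP.continuousAt (x := ψ) |>.preimage_mem_nhds (show orb ∈ nhds (P ψ) from hPψ ▸ orb_nhds)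
  refine Filter.mem_of_superset h ?_
  rintro χ ⟨k, hk, hχ⟩
  refine ⟨k ∘ₗ g, hk.comp hg, ?_⟩
  intro v₁ v₂ v₃
  have h3 := hχ (g v₁) (g v₂) (g v₃)
  have hes : ∀ x, e.symm (g x) = x := fun x => e.symm_apply_apply x
  have h4 : P χ ![g v₁, g v₂, g v₃] = χ ![v₁, v₂, v₃] := by
    change χ (fun a => e.symm (![g v₁, g v₂, g v₃] a)) = _
    congr 1
    funext a; fin_cases a <;> exact hes _
  rw [← h4, h3]
  rfl

/-- The `GL(7,ℝ)`-orbit of `φ₀` under pullback is open in the space of alternating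
3-forms on `ℝ⁷`. -/
theorem statement1 :
    IsOpen {ψ : AlternatingMap ℝ (Fin 7 → ℝ) ℝ (Fin 3) |
      ∃ g : (Fin 7 → ℝ) →ₗ[ℝ] (Fin 7 → ℝ), Function.Bijective g ∧
        ∀ v₁ v₂ v₃ : Fin 7 → ℝ, ψ ![v₁, v₂, v₃] = phi0 ![g v₁, g v₂, g v₃]} := by
  exact orb_open
end

section
/- Let A_α = diag(1,1,1,−1,−1,−1,−1), A_β = diag(1,−1,−1,1,1,−1,−1) and A_γ = diag(−1,1,−1,1,−1,1,−1) act on alternating 3-forms on ℝ⁷ by pullback. Then the subspace of alternating 3-forms on ℝ⁷ fixed by all three of A_α, A_β, A_γ has dimension exactly 7; it is spanned by dx^{123}, dx^{145}, dx^{167}, dx^{246}, dx^{257}, dx^{347}, dx^{356}. -/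
/-- The diagonal linear map on `ℝ⁷` with diagonal entries `d`. -/
noncomputable def Adiag (d : Fin 7 → ℝ) : (Fin 7 → ℝ) →ₗ[ℝ] (Fin 7 → ℝ) :=
  LinearMap.pi fun i => d i • LinearMap.proj i

/-- The seven index triples. -/
def tri : Fin 7 → Fin 3 → Fin 7 :=
  ![![0, 1, 2], ![0, 3, 4], ![0, 5, 6], ![1, 3, 5], ![1, 4, 6], ![2, 3, 6], ![2, 4, 5]]

/-- The seven forms as a family. -/
noncomputable def dxf (n : Fin 7) : AlternatingMap ℝ (Fin 7 → ℝ) ℝ (Fin 3) :=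
  dx (tri n 0) (tri n 1) (tri n 2)

/-- Standard basis vector. -/
noncomputable def ev (a : Fin 7) : Fin 7 → ℝ := fun b => if b = a then 1 else 0

/-- The three sign vectors, over the integers. -/
def sg : Fin 3 → Fin 7 → ℤ :=
  ![![1, 1, 1, -1, -1, -1, -1], ![1, -1, -1, 1, 1, -1, -1], ![-1, 1, -1, 1, -1, 1, -1]]

theorem dx_apply (i j k : Fin 7) (v : Fin 3 → Fin 7 → ℝ) :
    dx i j k v = Matrix.det (Matrix.of fun a b => v a (![i, j, k] b)) := rfl

theorem alt_sum_apply (f : Fin 7 → AlternatingMap ℝ (Fin 7 → ℝ) ℝ (Fin 3))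
    (v : Fin 3 → Fin 7 → ℝ) : (∑ m, f m) v = ∑ m, f m v := by
  simp [Fin.sum_univ_succ]

theorem dxf_ev (m n : Fin 7) : dxf m (fun a => ev (tri n a)) = if m = n then 1 else 0 := by
  rw [dxf, dx_apply, Matrix.det_fin_three]
  fin_cases m <;> fin_cases n <;> simp [tri, ev]

theorem dx_Adiag (i j k : Fin 7) (d : Fin 7 → ℝ) (h : d i * d j * d k = 1) :
    (dx i j k).compLinearMap (Adiag d) = dx i j k := by
  ext v
  rw [AlternatingMap.compLinearMap_apply, dx_apply, dx_apply, Matrix.det_fin_three,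
    Matrix.det_fin_three]
  simp only [Matrix.of_apply, Adiag, LinearMap.pi_apply, LinearMap.smul_apply, LinearMap.proj_apply, smul_eq_mul,
    Matrix.cons_val_zero, Matrix.cons_val_one, Matrix.cons_val]
  linear_combination (v 0 i * v 1 j * v 2 k - v 0 i * v 1 k * v 2 j - v 0 j * v 1 i * v 2 k
    + v 0 j * v 1 k * v 2 i + v 0 k * v 1 i * v 2 j - v 0 k * v 1 j * v 2 i) * h

theorem sg_tri : ∀ (s : Fin 3) (n : Fin 7),
    sg s (tri n 0) * sg s (tri n 1) * sg s (tri n 2) = 1 := by decide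

theorem dxf_fixed (s : Fin 3) (n : Fin 7) :
    (dxf n).compLinearMap (Adiag (fun i => (sg s i : ℝ))) = dxf n := by
  apply dx_Adiag
  exact_mod_cast sg_tri s n

theorem Adiag_ev (d : Fin 7 → ℝ) (a : Fin 7) : Adiag d (ev a) = d a • ev a := by
  ext b
  by_cases h : b = a <;> simp [Adiag, ev, h]

set_option maxRecDepth 100000 in
theorem combi_aux : ∀ a b c : Fin 7, a ≠ b → a ≠ c → b ≠ c →
    (∃ s, sg s a * sg s b * sg s c = -1) ∨
      ∃ n : Fin 7, ∃ p q r : Fin 3, p ≠ q ∧ p ≠ r ∧ q ≠ r ∧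
        a = tri n p ∧ b = tri n q ∧ c = tri n r := by
  decide

theorem perm_exists : ∀ p q r : Fin 3, p ≠ q → p ≠ r → q ≠ r →
    ∃ σ : Equiv.Perm (Fin 3), σ 0 = p ∧ σ 1 = q ∧ σ 2 = r := by
  decide

theorem eq_zero_of_fixed (ψ : AlternatingMap ℝ (Fin 7 → ℝ) ℝ (Fin 3))
    (hf : ∀ s, ψ.compLinearMap (Adiag (fun i => (sg s i : ℝ))) = ψ)
    (h0 : ∀ n, ψ (fun a => ev (tri n a)) = 0) : ψ = 0 := by
  refine Module.Basis.ext_alternating (Pi.basisFun ℝ (Fin 7)) fun v hv => ?_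
  have hev : (fun i => Pi.basisFun ℝ (Fin 7) (v i)) = fun i => ev (v i) := by
    funext i b
    simp [ev, Pi.single_apply]
  rw [hev, AlternatingMap.zero_apply]
  have hne : ∀ x y : Fin 3, x ≠ y → v x ≠ v y := fun x y h h' => h (hv h')
  rcases combi_aux (v 0) (v 1) (v 2) (hne _ _ (by decide)) (hne _ _ (by decide))
    (hne _ _ (by decide)) with ⟨s, hs⟩ | ⟨n, p, q, r, hpq, hpr, hqr, ha, hb, hc⟩
  · have h1 := congrArg (fun χ => χ (fun i => ev (v i))) (hf s)
    simp only [AlternatingMap.compLinearMap_apply, Adiag_ev] at h1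
    rw [← AlternatingMap.coe_multilinearMap, MultilinearMap.map_smul_univ,
      AlternatingMap.coe_multilinearMap, Fin.prod_univ_three] at h1
    have hs' : (sg s (v 0) : ℝ) * sg s (v 1) * sg s (v 2) = -1 := by exact_mod_cast hs
    rw [hs', smul_eq_mul] at h1
    linarith
  · obtain ⟨σ, h0', h1', h2'⟩ := perm_exists p q r hpq hpr hqr
    have hv' : (fun i => ev (v i)) = (fun a => ev (tri n a)) ∘ σ := by
      funext i
      fin_cases i
      · simp [ha, h0']
      · simp [hb, h1']
      · simp [hc, h2']
    rw [hv', AlternatingMap.map_perm, h0, smul_zero]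

theorem range_dxf : Set.range dxf =
    {dx 0 1 2, dx 0 3 4, dx 0 5 6, dx 1 3 5, dx 1 4 6, dx 2 3 6, dx 2 4 5} := by
  ext φ
  simp only [Set.mem_range, Fin.exists_fin_succ, dxf, Set.mem_insert_iff, Set.mem_singleton_iff]
  simp [tri, eq_comm]

theorem sum_dxf_ev (c : Fin 7 → ℝ) (n : Fin 7) :
    (∑ m, c m • dxf m) (fun a => ev (tri n a)) = c n := by
  rw [alt_sum_apply]
  simp [dxf_ev]

theorem linInd_dxf : LinearIndependent ℝ dxf := by
  rw [Fintype.linearIndependent_iff]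
  intro c hc n
  rw [← sum_dxf_ev c n, hc, AlternatingMap.zero_apply]

theorem fixed_iff (φ : AlternatingMap ℝ (Fin 7 → ℝ) ℝ (Fin 3)) :
    (∀ s, φ.compLinearMap (Adiag (fun i => (sg s i : ℝ))) = φ) ↔
      φ ∈ Submodule.span ℝ (Set.range dxf) := by
  constructor
  · intro hf
    have key : φ - ∑ m, φ (fun a => ev (tri m a)) • dxf m = 0 := by
      apply eq_zero_of_fixed
      · intro s
        ext v
        have h1 := congrArg (fun χ => χ v) (hf s)
        have h2 := fun n => congrArg (fun χ => χ v) (dxf_fixed s n)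
        simp only [AlternatingMap.compLinearMap_apply] at h1 h2
        simp only [AlternatingMap.compLinearMap_apply, AlternatingMap.sub_apply,
          alt_sum_apply, AlternatingMap.smul_apply, h1, h2]
      · intro n
        rw [AlternatingMap.sub_apply, sum_dxf_ev, sub_self]
    rw [sub_eq_zero.mp key]
    exact Submodule.sum_mem _ fun m _ =>
      Submodule.smul_mem _ _ (Submodule.subset_span ⟨m, rfl⟩)
  · intro h s
    induction h using Submodule.span_induction with
    | mem x hx =>
      obtain ⟨n, rfl⟩ := hx
      exact dxf_fixed s n
    | zero => rfl
    | add x y _ _ hx hy => rw [AlternatingMap.add_compLinearMap, hx, hy]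
    | smul a x _ hx =>
      conv_rhs => rw [← hx]
      rfl

theorem sg_cast : (fun s i => (sg s i : ℝ)) =
    ![![1, 1, 1, -1, -1, -1, -1], ![1, -1, -1, 1, 1, -1, -1], ![-1, 1, -1, 1, -1, 1, -1]] := by
  funext s i
  fin_cases s <;> fin_cases i <;> simp [sg]

/-- The subspace of alternating 3-forms on `ℝ⁷` fixed under pullback by the three diagonal maps
`A_α, A_β, A_γ` is exactly the span of
`dx^{123}, dx^{145}, dx^{167}, dx^{246}, dx^{257}, dx^{347}, dx^{356}`, and it has
dimension exactly `7`. -/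
theorem statement13 :
    {φ : AlternatingMap ℝ (Fin 7 → ℝ) ℝ (Fin 3) |
        φ.compLinearMap (Adiag ![1, 1, 1, -1, -1, -1, -1]) = φ ∧
        φ.compLinearMap (Adiag ![1, -1, -1, 1, 1, -1, -1]) = φ ∧
        φ.compLinearMap (Adiag ![-1, 1, -1, 1, -1, 1, -1]) = φ}
      = ↑(Submodule.span ℝ
          ({dx 0 1 2, dx 0 3 4, dx 0 5 6, dx 1 3 5, dx 1 4 6, dx 2 3 6, dx 2 4 5} :
            Set (AlternatingMap ℝ (Fin 7 → ℝ) ℝ (Fin 3)))) ∧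
    Module.finrank ℝ
      (Submodule.span ℝ
        ({dx 0 1 2, dx 0 3 4, dx 0 5 6, dx 1 3 5, dx 1 4 6, dx 2 3 6, dx 2 4 5} :
          Set (AlternatingMap ℝ (Fin 7 → ℝ) ℝ (Fin 3)))) = 7 := by
  rw [← range_dxf]
  refine ⟨?_, ?_⟩
  · ext φ
    rw [SetLike.mem_coe, ← fixed_iff, Fin.forall_fin_succ, Fin.forall_fin_succ,
      Fin.forall_fin_succ]
    have h0 := congrFun sg_cast 0
    have h1 := congrFun sg_cast 1
    have h2 := congrFun sg_cast 2
    simp only [Matrix.cons_val] at h0 h1 h2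
    simp [h0, h1, h2]
  · rw [finrank_span_eq_card linInd_dxf, Fintype.card_fin]
end
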